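/- Let n ≥ 1 and T > 0. Let g = (g^{αβ}) be a C¹ field of symmetric positive definite n×n matrices on an open neighborhood of [−T,T] × ℝⁿ, let φ : ℝⁿ → ℝ be Lipschitz with −T < φ(x) < T for all x, let b⁰, b¹,…,bⁿ, c, f : [−T,T] × ℝⁿ → ℝ be continuous, and let v be C² on a neighborhood of [−T,T] × ℝⁿ, vanishing for |x| ≥ R for some R > 0, and satisfying ∂_t²v − Σ g^{αβ}∂_α∂_β v + b⁰∂_t v + Σ b^α∂_α v + c v = f on [−T,T] × ℝⁿ. Then (all sums over α, β = 1,…,n, ∂_αφ the a.e. gradient of φ, and the integrand of the first integral evaluated at (φ(x), x)): ∫_{ℝⁿ} [(∂_t v)²·(1 − Σ g^{αβ}∂_αφ∂_βφ) + Σ g^{αβ}(∂_α v + ∂_αφ·∂_t v)(∂_β v + ∂_βφ·∂_t v) + v²](φ(x),x) dx = ∫_{ℝⁿ} [(∂_t v)² + Σ g^{αβ}∂_α v ∂_β v + v²](−T,x) dx − ∫∫_{{(t,x) : −T < t < φ(x)}} [2∂_t v·(b⁰∂_t v + Σ b^α∂_α v + c v) + 2Σ ∂_α(g^{αβ})·∂_t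 v ∂_β v − Σ (∂_t g^{αβ})·∂_α v ∂_β v − 2v∂_t v − 2f∂_t v] dt dx. -/

import Mathlib

open MeasureTheory

/-- Time partial derivative `∂_t u` of a function on `ℝ × ℝⁿ`. -/
noncomputable def Dt {n : ℕ} (u : ℝ × (Fin n → ℝ) → ℝ) (p : ℝ × (Fin n → ℝ)) : ℝ :=
  fderiv ℝ u p (1, 0)

/-- Spatial partial derivative `∂_α u` of a function on `ℝ × ℝⁿ`. -/
noncomputable def Dx {n : ℕ} (α : Fin n) (u : ℝ × (Fin n → ℝ) → ℝ)
    (p : ℝ × (Fin n → ℝ)) : ℝ :=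
  fderiv ℝ u p (0, Pi.single α 1)

open Set Filter Topology

/-- The shear homeomorphism `(s,x) ↦ (s + φ x, x)`. -/
def shearHomeo {n : ℕ} (φ : (Fin n → ℝ) → ℝ) (hφ : Continuous φ) :
    ℝ × (Fin n → ℝ) ≃ₜ ℝ × (Fin n → ℝ) where
  toFun p := (p.1 + φ p.2, p.2)
  invFun p := (p.1 - φ p.2, p.2)
  left_inv p := by simp
  right_inv p := by simp
  continuous_toFun := by fun_prop
  continuous_invFun := by fun_prop

lemma shear_integrable {n : ℕ} {φ : (Fin n → ℝ) → ℝ} (hφ : Continuous φ)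
    {W : ℝ × (Fin n → ℝ) → ℝ} (hW : Continuous W) (hWc : HasCompactSupport W) :
    Integrable (fun p : ℝ × (Fin n → ℝ) => W (p.1 + φ p.2, p.2)) := by
  have h1 : HasCompactSupport (W ∘ shearHomeo φ hφ) := hWc.comp_homeomorph _
  exact (hW.comp (shearHomeo φ hφ).continuous).integrable_of_hasCompactSupport h1

/-- Fubini on the subgraph, after the shear. -/
lemma integral_subgraph {n : ℕ} {φ : (Fin n → ℝ) → ℝ} (hφ : Continuous φ)
    {W : ℝ × (Fin n → ℝ) → ℝ} (hW : Continuous W) (hWc : HasCompactSupport W) :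
    ∫ p in {p : ℝ × (Fin n → ℝ) | p.1 < φ p.2}, W p
      = ∫ x : Fin n → ℝ, ∫ s in Iio (0:ℝ), W (s + φ x, x) := by
  have hm : MeasurableSet {p : ℝ × (Fin n → ℝ) | p.1 < φ p.2} :=
    (isOpen_lt continuous_fst (hφ.comp continuous_snd)).measurableSet
  have hi : Integrable W := hW.integrable_of_hasCompactSupport hWc
  rw [← integral_indicator hm, Measure.volume_eq_prod, integral_prod_symm]
  · congr 1
    ext x
    rw [← integral_indicator measurableSet_Iio]
    rw [← integral_add_right_eq_self _ (φ x)]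
    congr 1
    ext s
    simp [indicator]
  · rw [← Measure.volume_eq_prod]
    exact hi.indicator hm

lemma section_compact {n : ℕ} (x : Fin n → ℝ) (a : ℝ)
    {W : ℝ × (Fin n → ℝ) → ℝ} (hWc : HasCompactSupport W) :
    HasCompactSupport (fun s : ℝ => W (s + a, x)) := by
  apply HasCompactSupport.comp_isClosedEmbedding hWc (g := fun s : ℝ => (s + a, x))
  have h1 : IsClosedEmbedding (fun s : ℝ => (s, x)) := by
    apply Topology.IsClosedEmbedding.of_continuous_injective_isClosedMap
    · fun_prop
    · intro s t h; simpa using h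
    · intro s hs
      have : (fun s : ℝ => (s, x)) '' s = s ×ˢ {x} := by
        ext ⟨p, q⟩; simp; tauto
      rw [this]; exact hs.prod isClosed_singleton
  exact h1.comp (Homeomorph.addRight a).isClosedEmbedding

lemma contDiff_hasDerivAt_fst {n : ℕ} {H : ℝ × (Fin n → ℝ) → ℝ} (hH : ContDiff ℝ 1 H)
    (x : Fin n → ℝ) (a s : ℝ) :
    HasDerivAt (fun s : ℝ => H (s + a, x)) (Dt H (s + a, x)) s := by
  have h1 : HasFDerivAt H (fderiv ℝ H (s + a, x)) (s + a, x) :=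
    (hH.differentiable (by simp) _).hasFDerivAt
  have h2 : HasDerivAt (fun s : ℝ => (s + a, x)) ((1:ℝ), (0 : Fin n → ℝ)) s :=
    ((hasDerivAt_id s).add_const a).prodMk (hasDerivAt_const s x)
  exact h1.comp_hasDerivAt s h2

lemma Dt_continuous {n : ℕ} {H : ℝ × (Fin n → ℝ) → ℝ} (hH : ContDiff ℝ 1 H) :
    Continuous (Dt H) := (hH.continuous_fderiv (by simp)).clm_apply continuous_const
lemma Dx_continuous {n : ℕ} {H : ℝ × (Fin n → ℝ) → ℝ} (hH : ContDiff ℝ 1 H) (α : Fin n) :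
    Continuous (Dx α H) := (hH.continuous_fderiv (by simp)).clm_apply continuous_const
lemma Dt_compact {n : ℕ} {H : ℝ × (Fin n → ℝ) → ℝ} (hH : HasCompactSupport H) :
    HasCompactSupport (Dt H) := hH.fderiv_apply ℝ _
lemma Dx_compact {n : ℕ} {H : ℝ × (Fin n → ℝ) → ℝ} (hH : HasCompactSupport H) (α : Fin n) :
    HasCompactSupport (Dx α H) := hH.fderiv_apply ℝ _

lemma integral_Dt_section {n : ℕ} {H : ℝ × (Fin n → ℝ) → ℝ} (hH : ContDiff ℝ 1 H)
    (hc : HasCompactSupport H) (x : Fin n → ℝ) (a : ℝ) :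
    ∫ s in Iio (0:ℝ), Dt H (s + a, x) = H (a, x) := by
  rw [← integral_Iic_eq_integral_Iio]
  have hint : Integrable (fun s : ℝ => Dt H (s + a, x)) := by
    refine Continuous.integrable_of_hasCompactSupport ?_
      (section_compact x a (Dt_compact hc))
    exact (Dt_continuous hH).comp (by fun_prop)
  have := integral_Iic_of_hasDerivAt_of_tendsto' (a := 0) (m := 0)
    (fun s _ => contDiff_hasDerivAt_fst hH x a s) hint.integrableOn
    ((section_compact x a hc).is_zero_at_infty.mono_left
      (by rw [cocompact_eq_atBot_atTop]; exact le_sup_left))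
  simpa using this

lemma subgraph_Dt {n : ℕ} {φ : (Fin n → ℝ) → ℝ} (hφ : Continuous φ)
    {H : ℝ × (Fin n → ℝ) → ℝ} (hH : ContDiff ℝ 1 H) (hc : HasCompactSupport H) :
    ∫ p in {p : ℝ × (Fin n → ℝ) | p.1 < φ p.2}, Dt H p = ∫ x, H (φ x, x) := by
  rw [integral_subgraph hφ (Dt_continuous hH) (Dt_compact hc)]
  simp_rw [integral_Dt_section hH hc]

lemma graph_compact {n : ℕ} (φ : (Fin n → ℝ) → ℝ) (s : ℝ)
    {H : ℝ × (Fin n → ℝ) → ℝ} (hc : HasCompactSupport H) :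
    HasCompactSupport (fun x => H (s + φ x, x)) := by
  apply HasCompactSupport.intro (hc.image continuous_snd)
  intro x hx
  by_contra h
  exact hx ⟨(s + φ x, x), subset_tsupport _ h, rfl⟩

lemma graph_integrable {n : ℕ} {φ : (Fin n → ℝ) → ℝ} (hφ : Continuous φ)
    {H : ℝ × (Fin n → ℝ) → ℝ} (hH : Continuous H) (hc : HasCompactSupport H) :
    Integrable (fun x => H (φ x, x)) := by
  have := graph_compact φ 0 hc
  simp only [zero_add] at this
  exact Continuous.integrable_of_hasCompactSupport (by fun_prop) this

lemma fderiv_lip_bound {n : ℕ} {φ : (Fin n → ℝ) → ℝ} {K : NNReal} (hφ : LipschitzWith K φ)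
    (α : Fin n) (x : Fin n → ℝ) : ‖fderiv ℝ φ x (Pi.single α 1)‖ ≤ K := by
  have h1 := (fderiv ℝ φ x).le_opNorm (Pi.single α 1)
  have h2 := norm_fderiv_le_of_lipschitz ℝ hφ (x₀ := x)
  have h3 : ‖(Pi.single α (1:ℝ) : Fin n → ℝ)‖ = 1 := by rw [Pi.norm_single]; simp
  rw [h3, mul_one] at h1
  exact h1.trans h2

lemma graph_integrable' {n : ℕ} {φ : (Fin n → ℝ) → ℝ} {K : NNReal} (hφ : LipschitzWith K φ)
    {H : ℝ × (Fin n → ℝ) → ℝ} (hH : Continuous H) (hc : HasCompactSupport H) (α : Fin n) :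
    Integrable (fun x => fderiv ℝ φ x (Pi.single α 1) * H (φ x, x)) :=
  (graph_integrable hφ.continuous hH hc).bdd_mul
    (measurable_fderiv_apply_const ℝ φ _).aestronglyMeasurable
    (Eventually.of_forall fun x => fderiv_lip_bound hφ α x)

lemma slice_zero {n : ℕ} {φ : (Fin n → ℝ) → ℝ} {K : NNReal} (hφ : LipschitzWith K φ)
    {H : ℝ × (Fin n → ℝ) → ℝ} (hH : ContDiff ℝ 1 H) (hc : HasCompactSupport H) (α : Fin n)
    (s : ℝ) :
    ∫ x, (Dx α H (s + φ x, x) + fderiv ℝ φ x (Pi.single α 1) * Dt H (s + φ x, x)) = 0 := by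
  obtain ⟨C, hC⟩ := ContDiff.lipschitzWith_of_hasCompactSupport hc hH (by simp)
  have h1 : LipschitzWith (max K 1) (fun x : Fin n → ℝ => (s + φ x, x)) := by
    refine LipschitzWith.prodMk ?_ LipschitzWith.id
    exact LipschitzWith.of_dist_le_mul fun x y => by
      simpa using hφ.dist_le_mul x y
  have hG := hC.comp h1
  have hGc : HasCompactSupport (H ∘ fun x : Fin n → ℝ => (s + φ x, x)) :=
    graph_compact φ s hc
  have key := LipschitzWith.integral_lineDeriv_mul_eq (μ := volume)
    (LipschitzWith.const (1:ℝ)) hG hGc (-(Pi.single α (1:ℝ)))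
  simp only [neg_neg, mul_one] at key
  have h0 : ∀ x : Fin n → ℝ, lineDeriv ℝ (fun _ : Fin n → ℝ => (1:ℝ)) x (-(Pi.single α (1:ℝ))) = 0 := by
    intro x; simp [lineDeriv]
  simp only [h0, zero_mul, integral_zero] at key
  rw [key]
  apply integral_congr_ae
  filter_upwards [hφ.ae_differentiableAt] with x hx
  have h2 : HasFDerivAt (fun x : Fin n → ℝ => (s + φ x, x))
      ((fderiv ℝ φ x).prod (ContinuousLinearMap.id ℝ _)) x :=
    (hx.hasFDerivAt.const_add s).prodMk (hasFDerivAt_id x)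
  have h3 : HasFDerivAt H (fderiv ℝ H (s + φ x, x)) (s + φ x, x) :=
    (hH.differentiable (by simp) _).hasFDerivAt
  have h4 := HasFDerivAt.comp (g := H) (f := fun x : Fin n → ℝ => (s + φ x, x)) x h3 h2
  rw [(h4.hasLineDerivAt _).lineDeriv]
  simp only [Dx, Dt, ContinuousLinearMap.comp_apply, ContinuousLinearMap.prod_apply,
    ContinuousLinearMap.id_apply]
  rw [← smul_eq_mul, ← map_smul, ← map_add]
  simp

lemma subgraph_Dx {n : ℕ} {φ : (Fin n → ℝ) → ℝ} {K : NNReal} (hφ : LipschitzWith K φ)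
    {H : ℝ × (Fin n → ℝ) → ℝ} (hH : ContDiff ℝ 1 H) (hc : HasCompactSupport H) (α : Fin n) :
    ∫ p in {p : ℝ × (Fin n → ℝ) | p.1 < φ p.2}, Dx α H p
      = - ∫ x, fderiv ℝ φ x (Pi.single α 1) * H (φ x, x) := by
  rw [integral_subgraph hφ.continuous (Dx_continuous hH α) (Dx_compact hc α)]
  have hi1 : Integrable (fun p : ℝ × (Fin n → ℝ) => Dx α H (p.1 + φ p.2, p.2)) :=
    shear_integrable hφ.continuous (Dx_continuous hH α) (Dx_compact hc α)
  have hi2 : Integrable (fun p : ℝ × (Fin n → ℝ) =>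
      fderiv ℝ φ p.2 (Pi.single α 1) * Dt H (p.1 + φ p.2, p.2)) :=
    (shear_integrable hφ.continuous (Dt_continuous hH) (Dt_compact hc)).bdd_mul
      ((measurable_fderiv_apply_const ℝ φ _).comp measurable_snd).aestronglyMeasurable
      (Eventually.of_forall fun p => fderiv_lip_bound hφ α p.2)
  have hr : (volume.restrict (Iio (0:ℝ))).prod (volume : Measure (Fin n → ℝ))
      = (volume : Measure (ℝ × (Fin n → ℝ))).restrict (Iio 0 ×ˢ univ) := by
    rw [Measure.volume_eq_prod, ← Measure.prod_restrict, Measure.restrict_univ]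
  have hj1 : Integrable (Function.uncurry fun (s : ℝ) (x : Fin n → ℝ) => Dx α H (s + φ x, x))
      ((volume.restrict (Iio (0:ℝ))).prod volume) := by
    rw [hr]; exact hi1.integrableOn
  have hj2 : Integrable (Function.uncurry fun (s : ℝ) (x : Fin n → ℝ) =>
      fderiv ℝ φ x (Pi.single α 1) * Dt H (s + φ x, x))
      ((volume.restrict (Iio (0:ℝ))).prod volume) := by
    rw [hr]; exact hi2.integrableOn
  have e1 := integral_integral_swap hj1
  have e2 := integral_integral_swap hj2
  have e3 := integral_integral_add hj1 hj2
  simp only [Function.uncurry] at e3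
  simp_rw [slice_zero hφ hH hc α] at e3
  simp_rw [integral_const_mul, integral_Dt_section hH hc] at e2
  rw [integral_zero] at e3
  linarith

lemma region_split {n : ℕ} {T : ℝ} {φ : (Fin n → ℝ) → ℝ} (hφ : Continuous φ)
    (hφT : ∀ x, -T < φ x) {W : ℝ × (Fin n → ℝ) → ℝ} (hW : Integrable W) :
    ∫ p in {p : ℝ × (Fin n → ℝ) | -T < p.1 ∧ p.1 < φ p.2}, W p
      = (∫ p in {p : ℝ × (Fin n → ℝ) | p.1 < φ p.2}, W p)
        - ∫ p in {p : ℝ × (Fin n → ℝ) | p.1 < (fun _ => -T) p.2}, W p := by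
  have hm1 : MeasurableSet {p : ℝ × (Fin n → ℝ) | -T < p.1 ∧ p.1 < φ p.2} :=
    ((isOpen_lt continuous_const continuous_fst).inter
      (isOpen_lt continuous_fst (hφ.comp continuous_snd))).measurableSet
  have hm2 : MeasurableSet {p : ℝ × (Fin n → ℝ) | p.1 ≤ -T} :=
    (isClosed_le continuous_fst continuous_const).measurableSet
  have hu : {p : ℝ × (Fin n → ℝ) | p.1 < φ p.2}
      = {p : ℝ × (Fin n → ℝ) | -T < p.1 ∧ p.1 < φ p.2} ∪ {p : ℝ × (Fin n → ℝ) | p.1 ≤ -T} := by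
    ext p
    simp only [mem_ofPred_eq, mem_union]
    constructor
    · intro h
      rcases lt_or_ge (-T) p.1 with h1 | h1
      · exact Or.inl ⟨h1, h⟩
      · exact Or.inr h1
    · rintro (h | h)
      · exact h.2
      · exact h.trans_lt (hφT _)
  have hd : Disjoint {p : ℝ × (Fin n → ℝ) | -T < p.1 ∧ p.1 < φ p.2}
      {p : ℝ × (Fin n → ℝ) | p.1 ≤ -T} := by
    rw [Set.disjoint_left]
    intro p h1 h2
    exact absurd h1.1 (not_lt.mpr h2)
  have hae : ({p : ℝ × (Fin n → ℝ) | p.1 < (fun _ => -T) p.2} : Set _)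
      =ᵐ[volume] {p : ℝ × (Fin n → ℝ) | p.1 ≤ -T} := by
    have hz : (volume : Measure (ℝ × (Fin n → ℝ))) ({-T} ×ˢ univ) = 0 := by
      rw [Measure.volume_eq_prod, Measure.prod_prod]; simp
    have : ∀ᵐ p : ℝ × (Fin n → ℝ), p ∉ ({-T} ×ˢ univ : Set (ℝ × (Fin n → ℝ))) :=
      measure_eq_zero_iff_ae_notMem.mp hz
    filter_upwards [this] with p hp
    simp only [mem_prod, mem_singleton_iff, mem_univ, and_true] at hp
    apply propext
    change p.1 < -T ↔ p.1 ≤ -T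
    exact ⟨le_of_lt, fun h => lt_of_le_of_ne h hp⟩
  rw [hu, setIntegral_union hd hm2 hW.integrableOn hW.integrableOn, setIntegral_congr_set hae]
  ring

/-- Cutoff: replace a function which is `C¹` near the slab by a global one. -/
lemma exists_global {n : ℕ} {T : ℝ} {U : Set (ℝ × (Fin n → ℝ))} (hU : IsOpen U)
    (hUsub : Icc (-T) T ×ˢ (univ : Set (Fin n → ℝ)) ⊆ U)
    {H : ℝ × (Fin n → ℝ) → ℝ} (hH : ContDiffOn ℝ 1 H U) {R : ℝ}
    (hR : ∀ t x, R < ‖x‖ → H (t, x) = 0) :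
    ∃ G : ℝ × (Fin n → ℝ) → ℝ, ContDiff ℝ 1 G ∧ HasCompactSupport G ∧
      ∀ p ∈ Icc (-T) T ×ˢ (univ : Set (Fin n → ℝ)), G =ᶠ[𝓝 p] H := by
  have hK : IsCompact (Icc (-T) T ×ˢ Metric.closedBall (0 : Fin n → ℝ) (R + 1)) :=
    isCompact_Icc.prod (isCompact_closedBall _ _)
  have hKU : Icc (-T) T ×ˢ Metric.closedBall (0 : Fin n → ℝ) (R + 1) ⊆ U :=
    (Set.prod_mono_right (subset_univ _)).trans hUsub
  obtain ⟨L, hLc, hKL, hLU⟩ := exists_compact_between hK hU hKU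
  obtain ⟨χ, h1, h0, -⟩ := exists_contMDiffMap_one_nhds_of_subset_interior (n := 1)
    (modelWithCornersSelf ℝ (ℝ × (Fin n → ℝ))) hK.isClosed hKL
  have hχ : ContDiff ℝ 1 χ := χ.contMDiff.contDiff
  have hts : tsupport χ ⊆ L := closure_minimal
    (fun p hp => by by_contra h; exact hp (h0 p h)) hLc.isClosed
  refine ⟨fun p => χ p * H p, ?_, ?_, ?_⟩
  · rw [contDiff_iff_contDiffAt]
    intro p
    by_cases hp : p ∈ U
    · exact hχ.contDiffAt.mul (hH.contDiffAt (hU.mem_nhds hp))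
    · have hp' : p ∉ tsupport χ := fun h => hp (hLU (hts h))
      have : (fun p => χ p * H p) =ᶠ[𝓝 p] fun _ => 0 := by
        filter_upwards [notMem_tsupport_iff_eventuallyEq.mp hp'] with q hq
        simp [hq]
      exact contDiffAt_const.congr_of_eventuallyEq this
  · exact HasCompactSupport.mul_right (HasCompactSupport.of_support_subset_isCompact hLc
      ((subset_tsupport _).trans hts))
  · rintro ⟨t, x⟩ ⟨ht, -⟩
    rcases lt_or_ge R ‖x‖ with hx | hx
    · have : ∀ᶠ q : ℝ × (Fin n → ℝ) in 𝓝 (t, x), R < ‖q.2‖ :=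
        (isOpen_lt continuous_const continuous_snd.norm).mem_nhds hx
      filter_upwards [this] with q hq
      have := hR q.1 q.2 hq
      simp only [Prod.mk.eta] at this
      simp [this]
    · have hm : (t, x) ∈ Icc (-T) T ×ˢ Metric.closedBall (0 : Fin n → ℝ) (R + 1) :=
        ⟨ht, by simp; linarith⟩
      filter_upwards [h1.filter_mono (nhds_le_nhdsSet hm)] with q hq
      simp [hq]

lemma region_identities {n : ℕ} {T : ℝ} (hT : 0 < T) {U : Set (ℝ × (Fin n → ℝ))} (hU : IsOpen U)
    (hUsub : Icc (-T) T ×ˢ (univ : Set (Fin n → ℝ)) ⊆ U)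
    {φ : (Fin n → ℝ) → ℝ} {K : NNReal} (hφ : LipschitzWith K φ)
    (hφT : ∀ x, -T < φ x ∧ φ x < T)
    {H : ℝ × (Fin n → ℝ) → ℝ} (hH : ContDiffOn ℝ 1 H U) {R : ℝ}
    (hR : ∀ t x, R < ‖x‖ → H (t, x) = 0) :
    (IntegrableOn (Dt H) {p : ℝ × (Fin n → ℝ) | -T < p.1 ∧ p.1 < φ p.2}
      ∧ Integrable (fun x => H (φ x, x))
      ∧ ∫ p in {p : ℝ × (Fin n → ℝ) | -T < p.1 ∧ p.1 < φ p.2}, Dt H p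
        = (∫ x, H (φ x, x)) - ∫ x, H (-T, x)) ∧
    ∀ α : Fin n, IntegrableOn (Dx α H) {p : ℝ × (Fin n → ℝ) | -T < p.1 ∧ p.1 < φ p.2}
      ∧ Integrable (fun x => fderiv ℝ φ x (Pi.single α 1) * H (φ x, x))
      ∧ ∫ p in {p : ℝ × (Fin n → ℝ) | -T < p.1 ∧ p.1 < φ p.2}, Dx α H p
        = - ∫ x, fderiv ℝ φ x (Pi.single α 1) * H (φ x, x) := by
  obtain ⟨G, hG, hGc, hGH⟩ := exists_global hU hUsub hH hR
  have hm1 : MeasurableSet {p : ℝ × (Fin n → ℝ) | -T < p.1 ∧ p.1 < φ p.2} :=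
    ((isOpen_lt continuous_const continuous_fst).inter
      (isOpen_lt continuous_fst (hφ.continuous.comp continuous_snd))).measurableSet
  have hs : ∀ p ∈ {p : ℝ × (Fin n → ℝ) | -T < p.1 ∧ p.1 < φ p.2},
      p ∈ Icc (-T) T ×ˢ (univ : Set (Fin n → ℝ)) := fun p hp =>
    ⟨⟨hp.1.le, (hp.2.trans (hφT p.2).2).le⟩, mem_univ _⟩
  have e1 : ∀ x, H (φ x, x) = G (φ x, x) := fun x =>
    (hGH (φ x, x) ⟨⟨(hφT x).1.le, (hφT x).2.le⟩, mem_univ _⟩).eq_of_nhds.symm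
  have e2 : ∀ x, H (-T, x) = G (-T, x) := fun x =>
    (hGH (-T, x) ⟨⟨le_rfl, by simp only; linarith⟩, mem_univ _⟩).eq_of_nhds.symm
  have e3 : ∀ p ∈ {p : ℝ × (Fin n → ℝ) | -T < p.1 ∧ p.1 < φ p.2}, Dt G p = Dt H p := by
    intro p hp; simp only [Dt, (hGH p (hs p hp)).fderiv_eq]
  have e4 : ∀ α, ∀ p ∈ {p : ℝ × (Fin n → ℝ) | -T < p.1 ∧ p.1 < φ p.2}, Dx α G p = Dx α H p := by
    intro α p hp; simp only [Dx, (hGH p (hs p hp)).fderiv_eq]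
  have i1 : Integrable (Dt G) :=
    (Dt_continuous hG).integrable_of_hasCompactSupport (Dt_compact hGc)
  have i2 : ∀ α, Integrable (Dx α G) := fun α =>
    (Dx_continuous hG α).integrable_of_hasCompactSupport (Dx_compact hGc α)
  simp only [e1, e2]
  refine ⟨⟨i1.integrableOn.congr_fun e3 hm1,
    graph_integrable hφ.continuous hG.continuous hGc, ?_⟩, fun α =>
    ⟨(i2 α).integrableOn.congr_fun (e4 α) hm1, graph_integrable' hφ hG.continuous hGc α, ?_⟩⟩
  · rw [← setIntegral_congr_fun hm1 e3, region_split hφ.continuous (fun x => (hφT x).1) i1,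
      subgraph_Dt hφ.continuous hG hGc, subgraph_Dt continuous_const hG hGc]
  · rw [← setIntegral_congr_fun hm1 (e4 α),
      region_split hφ.continuous (fun x => (hφT x).1) (i2 α),
      subgraph_Dx hφ hG hGc, subgraph_Dx (LipschitzWith.const (-T)) hG hGc]
    simp

/-- Energy density. -/
noncomputable def eDens {n : ℕ} (g : Fin n → Fin n → ℝ × (Fin n → ℝ) → ℝ)
    (v : ℝ × (Fin n → ℝ) → ℝ) (p : ℝ × (Fin n → ℝ)) : ℝ :=
  (Dt v p) ^ 2 + (∑ α, ∑ β, g α β p * Dx α v p * Dx β v p) + (v p) ^ 2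

/-- Energy flux, up to the factor `-2`. -/
noncomputable def eFlux {n : ℕ} (g : Fin n → Fin n → ℝ × (Fin n → ℝ) → ℝ)
    (v : ℝ × (Fin n → ℝ) → ℝ) (α : Fin n) (p : ℝ × (Fin n → ℝ)) : ℝ :=
  Dt v p * ∑ β, g α β p * Dx β v p

lemma Dt_eDens {n : ℕ} {g : Fin n → Fin n → ℝ × (Fin n → ℝ) → ℝ}
    {v : ℝ × (Fin n → ℝ) → ℝ} {p : ℝ × (Fin n → ℝ)}
    (hg : ∀ α β, DifferentiableAt ℝ (g α β) p) (hv : DifferentiableAt ℝ v p)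
    (ht : DifferentiableAt ℝ (Dt v) p) (hx : ∀ α, DifferentiableAt ℝ (Dx α v) p) :
    Dt (eDens g v) p = 2 * Dt v p * Dt (Dt v) p
      + (∑ α, ∑ β, (Dt (g α β) p * Dx α v p * Dx β v p
          + g α β p * Dt (Dx α v) p * Dx β v p + g α β p * Dx α v p * Dt (Dx β v) p))
      + 2 * v p * Dt v p := by
  have h := ((ht.hasFDerivAt.pow 2).add (HasFDerivAt.fun_sum (u := Finset.univ)
    fun α _ => HasFDerivAt.fun_sum (u := Finset.univ) fun β _ =>
      ((hg α β).hasFDerivAt.fun_mul (hx α).hasFDerivAt).fun_mul (hx β).hasFDerivAt)).add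
        (hv.hasFDerivAt.pow 2)
  have h' : HasFDerivAt (eDens g v) _ p := h
  have hDt : ∀ u : ℝ × (Fin n → ℝ) → ℝ, fderiv ℝ u p (1, 0) = Dt u p := fun _ => rfl
  conv_lhs => rw [Dt, h'.fderiv]
  simp only [add_apply, sum_apply,
    smul_apply, smul_eq_mul, nsmul_eq_mul, hDt]
  congr 1
  · congr 1
    · simp
    · refine Finset.sum_congr rfl fun α _ => Finset.sum_congr rfl fun β _ => ?_
      ring
  · simp

lemma Dx_eFlux {n : ℕ} {g : Fin n → Fin n → ℝ × (Fin n → ℝ) → ℝ}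
    {v : ℝ × (Fin n → ℝ) → ℝ} {p : ℝ × (Fin n → ℝ)}
    (hg : ∀ α β, DifferentiableAt ℝ (g α β) p)
    (ht : DifferentiableAt ℝ (Dt v) p) (hx : ∀ α, DifferentiableAt ℝ (Dx α v) p) (α : Fin n) :
    Dx α (eFlux g v α) p = ∑ β, (g α β p * Dx α (Dt v) p * Dx β v p
      + Dx α (g α β) p * Dt v p * Dx β v p + Dt v p * (g α β p * Dx α (Dx β v) p)) := by
  have h := ht.hasFDerivAt.fun_mul (HasFDerivAt.fun_sum (u := Finset.univ) fun β _ =>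
      ((hg α β).hasFDerivAt.fun_mul (hx β).hasFDerivAt))
  have h' : HasFDerivAt (eFlux g v α) _ p := h
  have hDx : ∀ u : ℝ × (Fin n → ℝ) → ℝ, fderiv ℝ u p (0, Pi.single α 1) = Dx α u p :=
    fun _ => rfl
  conv_lhs => rw [Dx, h'.fderiv]
  simp only [add_apply, sum_apply,
    smul_apply, smul_eq_mul, hDx]
  rw [Finset.mul_sum, Finset.sum_mul, ← Finset.sum_add_distrib]
  exact Finset.sum_congr rfl fun β _ => by ring

lemma Dt_contDiffOn {n : ℕ} {U : Set (ℝ × (Fin n → ℝ))} (hU : IsOpen U)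
    {v : ℝ × (Fin n → ℝ) → ℝ} (hv : ContDiffOn ℝ 2 v U) : ContDiffOn ℝ 1 (Dt v) U :=
  (hv.fderiv_of_isOpen hU (by norm_num)).clm_apply contDiffOn_const

lemma Dx_contDiffOn {n : ℕ} {U : Set (ℝ × (Fin n → ℝ))} (hU : IsOpen U)
    {v : ℝ × (Fin n → ℝ) → ℝ} (hv : ContDiffOn ℝ 2 v U) (α : Fin n) :
    ContDiffOn ℝ 1 (Dx α v) U :=
  (hv.fderiv_of_isOpen hU (by norm_num)).clm_apply contDiffOn_const

lemma Dt_Dx_comm {n : ℕ} {U : Set (ℝ × (Fin n → ℝ))} (hU : IsOpen U)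
    {v : ℝ × (Fin n → ℝ) → ℝ} (hv : ContDiffOn ℝ 2 v U) (α : Fin n)
    {p : ℝ × (Fin n → ℝ)} (hp : p ∈ U) : Dt (Dx α v) p = Dx α (Dt v) p := by
  have hs : IsSymmSndFDerivAt ℝ v p :=
    (hv.contDiffAt (hU.mem_nhds hp)).isSymmSndFDerivAt (by simp)
  have hd : DifferentiableAt ℝ (fderiv ℝ v) p :=
    ((hv.fderiv_of_isOpen hU (m := 1) (by norm_num)).contDiffAt
      (hU.mem_nhds hp)).differentiableAt (by simp)
  have key : ∀ w z : ℝ × (Fin n → ℝ),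
      fderiv ℝ (fun q => fderiv ℝ v q w) p z = fderiv ℝ (fderiv ℝ v) p z w := by
    intro w z
    have := hd.hasFDerivAt.clm_apply (hasFDerivAt_const w p)
    rw [this.fderiv]; simp
  change fderiv ℝ (fun q => fderiv ℝ v q _) p _ = fderiv ℝ (fun q => fderiv ℝ v q _) p _
  rw [key, key]
  exact hs _ _

/-- Pointwise energy identity. -/
lemma pointwise_identity {n : ℕ} {U : Set (ℝ × (Fin n → ℝ))} (hU : IsOpen U)
    {g : Fin n → Fin n → ℝ × (Fin n → ℝ) → ℝ}
    (hg : ∀ α β, ContDiffOn ℝ 1 (g α β) U)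
    (hgsymm : ∀ α β p, g α β p = g β α p)
    {v : ℝ × (Fin n → ℝ) → ℝ} (hv : ContDiffOn ℝ 2 v U)
    {p : ℝ × (Fin n → ℝ)} (hp : p ∈ U) :
    Dt (eDens g v) p - 2 * ∑ α, Dx α (eFlux g v α) p
      = 2 * Dt v p * (Dt (Dt v) p - (∑ α, ∑ β, g α β p * Dx α (Dx β v) p))
        + (∑ α, ∑ β, Dt (g α β) p * Dx α v p * Dx β v p)
        - 2 * (∑ α, ∑ β, Dx α (g α β) p * Dt v p * Dx β v p)
        + 2 * v p * Dt v p := by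
  have hn := hU.mem_nhds hp
  have hg' : ∀ α β, DifferentiableAt ℝ (g α β) p := fun α β =>
    ((hg α β).contDiffAt hn).differentiableAt (by simp)
  have ht := ((Dt_contDiffOn hU hv).contDiffAt hn).differentiableAt (by simp)
  have hx := fun α => ((Dx_contDiffOn hU hv α).contDiffAt hn).differentiableAt (by simp)
  rw [Dt_eDens hg' ((hv.contDiffAt hn).differentiableAt (by simp)) ht hx]
  simp_rw [Dx_eFlux hg' ht hx, Dt_Dx_comm hU hv _ hp, Finset.sum_add_distrib, ← Finset.mul_sum]
  have hc : (∑ α, ∑ β, g α β p * Dx α v p * Dx β (Dt v) p)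
      = ∑ α, ∑ β, g α β p * Dx α (Dt v) p * Dx β v p := by
    rw [Finset.sum_comm]
    refine Finset.sum_congr rfl fun α _ => Finset.sum_congr rfl fun β _ => ?_
    rw [hgsymm β α]; ring
  rw [hc]
  ring

lemma graph_algebra {n : ℕ} (G : Fin n → Fin n → ℝ) (hG : ∀ α β, G α β = G β α)
    (w : ℝ) (a d : Fin n → ℝ) :
    w ^ 2 * (1 - ∑ α, ∑ β, G α β * d α * d β)
      + (∑ α, ∑ β, G α β * (a α + d α * w) * (a β + d β * w))
    = w ^ 2 + (∑ α, ∑ β, G α β * a α * a β)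
      + 2 * ∑ α, d α * (w * ∑ β, G α β * a β) := by
  have h1 : (∑ α, ∑ β, G α β * (a α + d α * w) * (a β + d β * w))
      = (∑ α, ∑ β, G α β * a α * a β) + (∑ α, ∑ β, w * (G α β * d α * a β))
        + (∑ α, ∑ β, w * (G α β * a α * d β)) + ∑ α, ∑ β, w ^ 2 * (G α β * d α * d β) := by
    simp only [← Finset.sum_add_distrib]
    refine Finset.sum_congr rfl fun α _ => Finset.sum_congr rfl fun β _ => ?_
    ring
  have h2 : (∑ α, ∑ β, w * (G α β * a α * d β)) = ∑ α, ∑ β, w * (G α β * d α * a β) := by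
    rw [Finset.sum_comm]
    refine Finset.sum_congr rfl fun α _ => Finset.sum_congr rfl fun β _ => ?_
    rw [hG β α]; ring
  have h3 : (∑ α, d α * (w * ∑ β, G α β * a β)) = ∑ α, ∑ β, w * (G α β * d α * a β) := by
    simp only [Finset.mul_sum]
    refine Finset.sum_congr rfl fun α _ => Finset.sum_congr rfl fun β _ => ?_
    ring
  rw [h1, h2, h3]
  simp only [← Finset.mul_sum]
  ring

/-- Energy balance identity between the initial slice `{t = −T}` and
the Lipschitz graph hypersurface `Σ = {(φ(x),x)}`, obtained by integrating the energy
density identity over the past region `{−T < t < φ(x)}`. -/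
theorem stmt_8 (n : ℕ) (hn : 1 ≤ n) (T : ℝ) (hT : 0 < T)
    (U : Set (ℝ × (Fin n → ℝ))) (hU : IsOpen U)
    (hUsub : Set.Icc (-T) T ×ˢ (Set.univ : Set (Fin n → ℝ)) ⊆ U)
    (g : Fin n → Fin n → ℝ × (Fin n → ℝ) → ℝ)
    (hg : ∀ α β, ContDiffOn ℝ 1 (g α β) U)
    (hgsymm : ∀ α β p, g α β p = g β α p)
    (hgpos : ∀ p ∈ U, ∀ ξ : Fin n → ℝ, ξ ≠ 0 → 0 < ∑ α, ∑ β, g α β p * ξ α * ξ β)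
    (φ : (Fin n → ℝ) → ℝ) (hφ : ∃ K : NNReal, LipschitzWith K φ)
    (hφT : ∀ x, -T < φ x ∧ φ x < T)
    (b0 : ℝ × (Fin n → ℝ) → ℝ) (b : Fin n → ℝ × (Fin n → ℝ) → ℝ)
    (c f : ℝ × (Fin n → ℝ) → ℝ)
    (hb0 : ContinuousOn b0 (Set.Icc (-T) T ×ˢ (Set.univ : Set (Fin n → ℝ))))
    (hb : ∀ α, ContinuousOn (b α) (Set.Icc (-T) T ×ˢ (Set.univ : Set (Fin n → ℝ))))
    (hc : ContinuousOn c (Set.Icc (-T) T ×ˢ (Set.univ : Set (Fin n → ℝ))))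
    (hf : ContinuousOn f (Set.Icc (-T) T ×ˢ (Set.univ : Set (Fin n → ℝ))))
    (v : ℝ × (Fin n → ℝ) → ℝ) (hv : ContDiffOn ℝ 2 v U)
    (hsupp : ∃ R : ℝ, 0 < R ∧ ∀ (t : ℝ) (x : Fin n → ℝ), R ≤ ‖x‖ → v (t, x) = 0)
    (heq : ∀ p ∈ Set.Icc (-T) T ×ˢ (Set.univ : Set (Fin n → ℝ)),
      Dt (Dt v) p - (∑ α, ∑ β, g α β p * Dx α (Dx β v) p)
        + b0 p * Dt v p + (∑ α, b α p * Dx α v p) + c p * v p = f p) :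
    (∫ x : Fin n → ℝ,
        ((Dt v (φ x, x)) ^ 2 *
            (1 - ∑ α, ∑ β, g α β (φ x, x) * fderiv ℝ φ x (Pi.single α 1)
              * fderiv ℝ φ x (Pi.single β 1))
          + (∑ α, ∑ β, g α β (φ x, x)
              * (Dx α v (φ x, x) + fderiv ℝ φ x (Pi.single α 1) * Dt v (φ x, x))
              * (Dx β v (φ x, x) + fderiv ℝ φ x (Pi.single β 1) * Dt v (φ x, x)))
          + (v (φ x, x)) ^ 2))
      = (∫ x : Fin n → ℝ,
          ((Dt v (-T, x)) ^ 2
            + (∑ α, ∑ β, g α β (-T, x) * Dx α v (-T, x) * Dx β v (-T, x))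
            + (v (-T, x)) ^ 2))
        - ∫ p in {p : ℝ × (Fin n → ℝ) | -T < p.1 ∧ p.1 < φ p.2},
            (2 * Dt v p * (b0 p * Dt v p + (∑ α, b α p * Dx α v p) + c p * v p)
              + 2 * (∑ α, ∑ β, Dx α (g α β) p * Dt v p * Dx β v p)
              - (∑ α, ∑ β, Dt (g α β) p * Dx α v p * Dx β v p)
              - 2 * v p * Dt v p - 2 * f p * Dt v p) := by
  obtain ⟨K, hK⟩ := hφ
  obtain ⟨R, -, hR⟩ := hsupp
  have hfz : ∀ (t : ℝ) (x : Fin n → ℝ), R < ‖x‖ → fderiv ℝ v (t, x) = 0 := by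
    intro t x hx
    have : v =ᶠ[𝓝 (t, x)] fun _ => 0 := by
      have : ∀ᶠ q : ℝ × (Fin n → ℝ) in 𝓝 (t, x), R < ‖q.2‖ :=
        (isOpen_lt continuous_const continuous_snd.norm).mem_nhds hx
      filter_upwards [this] with q hq
      exact hR q.1 q.2 hq.le
    rw [this.fderiv_eq]; simp
  have hvt := Dt_contDiffOn hU hv
  have hvx := Dx_contDiffOn hU hv
  have hv1 : ContDiffOn ℝ 1 v U := hv.of_le (by norm_num)
  have hE : ContDiffOn ℝ 1 (eDens g v) U :=
    ((hvt.pow 2).add (ContDiffOn.sum fun α _ => ContDiffOn.sum fun β _ =>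
      ((hg α β).mul (hvx α)).mul (hvx β))).add (hv1.pow 2)
  have hF : ∀ α, ContDiffOn ℝ 1 (eFlux g v α) U := fun α =>
    hvt.mul (ContDiffOn.sum fun β _ => (hg α β).mul (hvx β))
  have hE0 : ∀ t x, R < ‖x‖ → eDens g v (t, x) = 0 := by
    intro t x hx
    simp [eDens, Dt, Dx, hfz t x hx, hR t x hx.le]
  have hF0 : ∀ α, ∀ t x, R < ‖x‖ → eFlux g v α (t, x) = 0 := by
    intro α t x hx
    simp [eFlux, Dt, hfz t x hx]
  obtain ⟨⟨iE, jE, kE⟩, -⟩ := region_identities hT hU hUsub hK hφT hE hE0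
  have hFF := fun α => (region_identities hT hU hUsub hK hφT (hF α) (hF0 α)).2 α
  have hm1 : MeasurableSet {p : ℝ × (Fin n → ℝ) | -T < p.1 ∧ p.1 < φ p.2} :=
    ((isOpen_lt continuous_const continuous_fst).inter
      (isOpen_lt continuous_fst (hK.continuous.comp continuous_snd))).measurableSet
  have hL : ∀ x, ((Dt v (φ x, x)) ^ 2 *
            (1 - ∑ α, ∑ β, g α β (φ x, x) * fderiv ℝ φ x (Pi.single α 1)
              * fderiv ℝ φ x (Pi.single β 1))
          + (∑ α, ∑ β, g α β (φ x, x)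
              * (Dx α v (φ x, x) + fderiv ℝ φ x (Pi.single α 1) * Dt v (φ x, x))
              * (Dx β v (φ x, x) + fderiv ℝ φ x (Pi.single β 1) * Dt v (φ x, x)))
          + (v (φ x, x)) ^ 2)
      = eDens g v (φ x, x)
        + 2 * ∑ α, fderiv ℝ φ x (Pi.single α 1) * eFlux g v α (φ x, x) := by
    intro x
    rw [graph_algebra (fun α β => g α β (φ x, x)) (fun α β => hgsymm α β _) (Dt v (φ x, x))
      (fun α => Dx α v (φ x, x)) (fun α => fderiv ℝ φ x (Pi.single α 1))]
    simp only [eDens, eFlux]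
    ring
  have hI : ∀ p ∈ {p : ℝ × (Fin n → ℝ) | -T < p.1 ∧ p.1 < φ p.2},
      (2 * Dt v p * (b0 p * Dt v p + (∑ α, b α p * Dx α v p) + c p * v p)
              + 2 * (∑ α, ∑ β, Dx α (g α β) p * Dt v p * Dx β v p)
              - (∑ α, ∑ β, Dt (g α β) p * Dx α v p * Dx β v p)
              - 2 * v p * Dt v p - 2 * f p * Dt v p)
      = 2 * (∑ α, Dx α (eFlux g v α) p) - Dt (eDens g v) p := by
    intro p hp
    have hs : p ∈ Set.Icc (-T) T ×ˢ (Set.univ : Set (Fin n → ℝ)) :=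
      ⟨⟨hp.1.le, (hp.2.trans (hφT p.2).2).le⟩, Set.mem_univ _⟩
    have h1 := pointwise_identity hU hg hgsymm hv (hUsub hs)
    have h2 := heq p hs
    linear_combination h1 + (2 * Dt v p) * h2
  rw [integral_congr_ae (Filter.Eventually.of_forall hL), setIntegral_congr_fun hm1 hI]
  rw [integral_add jE ((integrable_finsetSum _ fun α _ => (hFF α).2.1).const_mul 2),
    integral_const_mul, integral_finsetSum _ (fun α _ => (hFF α).2.1)]
  rw [integral_sub ((integrable_finsetSum _ fun α _ => (hFF α).1).const_mul 2) iE,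
    integral_const_mul, integral_finsetSum _ (fun α _ => (hFF α).1), kE]
  simp only [fun α => (hFF α).2.2, Finset.sum_neg_distrib]
  change _ = (∫ x, eDens g v (-T, x)) - _
  ring
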